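/- arXiv:1902.03734 — 2 statements merged into one kernel-verified Lean document; each statement's English description precedes it below -/
import Mathlib

section
/- Let f(x) be a monic polynomial of degree m with integer coefficients such that not all complex roots of f are integers (equivalently, f is not a product of m monic linear polynomials with integer coefficients), and let q_1, q_2, ..., q_m be integers. Then the equation (y + q_1)(y + q_2)···(y + q_m) = f(x) has only finitely many solutions (x, y) with x and y positive integers. -/
open Polynomial

/-!
A complex polynomial `f` of degree `n` with leading coefficient `a` and all roots in the ball of
radius `B` satisfies `|f x| ≤ |a| (|x| + B) ^ n`, and `|a| (|x| - B) ^ n ≤ |f x|` once `B ≤ |x|`.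
Hence if `f` and `g` share their degree and the size of their leading coefficient, `|x|` and `|y|`
differ by a bounded amount for every integer solution of `f x = g y`, so all solutions lie on
finitely many lines `y = ± x + d`. A line carrying infinitely many solutions forces the identity
`f(X) = g(± X + d)`; if `f` is monic and `g` is a product of monic linear factors over `ℤ`, then
`f` is such a product too.
-/

section NormedField

variable {K : Type*} [NormedField K] {p q : K[X]}

theorem norm_eval_eq_prod_norm_sub_roots (hp : p.Splits) (x : K) :
    ‖p.eval x‖ = ‖p.leadingCoeff‖ * (p.roots.map fun r ↦ ‖x - r‖).prod := by
  rw [hp.eval_eq_prod_roots, norm_mul]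
  congr 1
  exact (map_multiset_prod (normHom : K →*₀ ℝ) _).trans (by rw [Multiset.map_map]; rfl)

theorem norm_le_cauchyBound_of_mem_roots {r : K} (hr : r ∈ p.roots) : ‖r‖ ≤ p.cauchyBound :=
  (isRoot_of_mem_roots hr).norm_lt_cauchyBound (ne_zero_of_mem_roots hr) |>.le

theorem norm_eval_le_mul_pow (hp : p.Splits) (x : K) :
    ‖p.eval x‖ ≤ ‖p.leadingCoeff‖ * (‖x‖ + p.cauchyBound) ^ p.natDegree := by
  rw [norm_eval_eq_prod_norm_sub_roots hp, hp.natDegree_eq_card_roots, ← Multiset.prod_replicate,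
    ← Multiset.map_const']
  gcongr
  refine Multiset.prod_map_le_prod_map₀ _ _ (fun r _ ↦ norm_nonneg _) fun r hr ↦ ?_
  linarith [norm_sub_le x r, norm_le_cauchyBound_of_mem_roots hr]

theorem mul_pow_le_norm_eval (hp : p.Splits) {x : K} (hx : p.cauchyBound ≤ ‖x‖) :
    ‖p.leadingCoeff‖ * (‖x‖ - p.cauchyBound) ^ p.natDegree ≤ ‖p.eval x‖ := by
  rw [norm_eval_eq_prod_norm_sub_roots hp, hp.natDegree_eq_card_roots, ← Multiset.prod_replicate,
    ← Multiset.map_const']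
  gcongr
  refine Multiset.prod_map_le_prod_map₀ _ _ (fun r _ ↦ sub_nonneg.mpr hx) fun r hr ↦ ?_
  linarith [norm_sub_norm_le x r, norm_le_cauchyBound_of_mem_roots hr]

theorem norm_le_add_cauchyBound_of_norm_eval_le (hp : p.Splits) (hq : q.Splits)
    (hdeg : p.natDegree = q.natDegree) (hdeg0 : p.natDegree ≠ 0)
    (hlead : ‖q.leadingCoeff‖ ≤ ‖p.leadingCoeff‖) {x y : K} (hxy : ‖p.eval x‖ ≤ ‖q.eval y‖) :
    ‖x‖ ≤ ‖y‖ + q.cauchyBound + p.cauchyBound := by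
  rcases le_total ‖x‖ p.cauchyBound with hx | hx
  · have : 0 ≤ ‖y‖ + q.cauchyBound := by positivity
    linarith
  · have hlead0 : 0 < ‖p.leadingCoeff‖ :=
      norm_pos_iff.mpr (leadingCoeff_ne_zero.mpr (ne_zero_of_natDegree_gt hdeg0.bot_lt))
    have hpow : (‖x‖ - p.cauchyBound) ^ p.natDegree ≤ (‖y‖ + q.cauchyBound) ^ p.natDegree := by
      refine le_of_mul_le_mul_left ?_ hlead0
      calc ‖p.leadingCoeff‖ * (‖x‖ - p.cauchyBound) ^ p.natDegree
          ≤ ‖p.eval x‖ := mul_pow_le_norm_eval hp hx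
        _ ≤ ‖q.eval y‖ := hxy
        _ ≤ ‖q.leadingCoeff‖ * (‖y‖ + q.cauchyBound) ^ q.natDegree := norm_eval_le_mul_pow hq y
        _ ≤ ‖p.leadingCoeff‖ * (‖y‖ + q.cauchyBound) ^ p.natDegree := by rw [hdeg]; gcongr
    exact sub_le_iff_le_add.mp (le_of_pow_le_pow_left₀ hdeg0 (by positivity) hpow)

end NormedField

theorem exists_forall_abs_le_add_of_abs_eval_le {f g : ℤ[X]} (hdeg : f.natDegree = g.natDegree)
    (hdeg0 : f.natDegree ≠ 0) (hlead : |g.leadingCoeff| ≤ |f.leadingCoeff|) :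
    ∃ B : ℤ, ∀ x y : ℤ, |f.eval x| ≤ |g.eval y| → |x| ≤ |y| + B := by
  have hinj : Function.Injective (Int.castRingHom ℂ) := Int.cast_injective
  set p := f.map (Int.castRingHom ℂ) with hp
  set q := g.map (Int.castRingHom ℂ) with hq
  have hp_deg : p.natDegree = f.natDegree := natDegree_map_eq_of_injective hinj f
  have hq_deg : q.natDegree = g.natDegree := natDegree_map_eq_of_injective hinj g
  have hpq_lead : ‖q.leadingCoeff‖ ≤ ‖p.leadingCoeff‖ := by
    simpa only [hp, hq, leadingCoeff_map_of_injective hinj, eq_intCast, Complex.norm_intCast,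
      ← Int.cast_abs, Int.cast_le] using hlead
  refine ⟨⌈(q.cauchyBound + p.cauchyBound : ℝ)⌉, fun x y hxy ↦ ?_⟩
  have hpq_eval : ‖p.eval (x : ℂ)‖ ≤ ‖q.eval (y : ℂ)‖ := by
    simpa only [hp, hq, eval_intCast_map, eq_intCast, Int.cast_id, Complex.norm_intCast,
      ← Int.cast_abs, Int.cast_le] using hxy
  have hbound := norm_le_add_cauchyBound_of_norm_eval_le (IsAlgClosed.splits p)
    (IsAlgClosed.splits q) (by rw [hp_deg, hq_deg, hdeg]) (by rwa [hp_deg]) hpq_lead hpq_eval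
  rw [Complex.norm_intCast, Complex.norm_intCast, add_assoc] at hbound
  have hceil : |(x : ℝ)| ≤ |(y : ℝ)| + ⌈(q.cauchyBound + p.cauchyBound : ℝ)⌉ :=
    hbound.trans (add_le_add_right (Int.le_ceil _) _)
  exact_mod_cast hceil

theorem exists_forall_abs_abs_sub_abs_le {f g : ℤ[X]} (hdeg : f.natDegree = g.natDegree)
    (hdeg0 : f.natDegree ≠ 0) (hlead : |f.leadingCoeff| = |g.leadingCoeff|) :
    ∃ B : ℤ, ∀ x y : ℤ, |f.eval x| = |g.eval y| → |(|y| - |x|)| ≤ B := by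
  obtain ⟨B, hB⟩ := exists_forall_abs_le_add_of_abs_eval_le hdeg hdeg0 hlead.ge
  obtain ⟨B', hB'⟩ := exists_forall_abs_le_add_of_abs_eval_le hdeg.symm (hdeg ▸ hdeg0) hlead.le
  refine ⟨max B' B, fun x y hxy ↦ abs_sub_le_iff.mpr ⟨?_, ?_⟩⟩
  · exact (sub_le_iff_le_add'.mpr (hB' y x hxy.ge)).trans (le_max_left _ _)
  · exact (sub_le_iff_le_add'.mpr (hB x y hxy.le)).trans (le_max_right _ _)

theorem exists_unit_abs_sub_mul_eq_abs_abs_sub_abs {R : Type*} [CommRing R] [LinearOrder R]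
    (x y : R) : ∃ u : Rˣ, |y - u * x| = |(|y| - |x|)| := by
  rcases abs_choice x with hx | hx <;> rcases abs_choice y with hy | hy
  · exact ⟨1, by simp [hx, hy]⟩
  · exact ⟨-1, by rw [hx, hy, ← abs_neg]; congr 1; push_cast; ring⟩
  · exact ⟨-1, by rw [hx, hy]; congr 1; push_cast; ring⟩
  · exact ⟨1, by rw [hx, hy, ← abs_neg]; congr 1; push_cast; ring⟩

theorem finite_setOf_eval_eq_eval_on_graph {R : Type*} [CommRing R] [IsDomain R] {f g l : R[X]}
    (h : f ≠ g.comp l) : {p : R × R | f.eval p.1 = g.eval p.2 ∧ p.2 = l.eval p.1}.Finite := by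
  have hfin : {x | f.eval x = (g.comp l).eval x}.Finite := by
    by_contra hinf
    exact h (eq_of_infinite_eval_eq _ _ hinf)
  refine (hfin.image fun x ↦ (x, l.eval x)).subset ?_
  rintro ⟨x, y⟩ ⟨hxy, hy⟩
  obtain rfl : y = l.eval x := hy
  exact ⟨x, hxy.trans eval_comp.symm, rfl⟩

section ProdXAddC

variable {R ι : Type*} [CommRing R] [Fintype ι]

theorem monic_prod_X_add_C (q : ι → R) : (∏ i, (X + C (q i))).Monic :=
  monic_prod_of_monic _ _ fun i _ ↦ monic_X_add_C (q i)

theorem natDegree_prod_X_add_C [Nontrivial R] (q : ι → R) :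
    (∏ i, (X + C (q i))).natDegree = Fintype.card ι := by
  rw [natDegree_prod_of_monic _ _ fun i _ ↦ monic_X_add_C (q i)]
  simp only [natDegree_X_add_C, Finset.sum_const, Finset.card_univ, smul_eq_mul, mul_one]

theorem exists_comp_eq_prod_X_add_C (q : ι → R) (u : Rˣ) (d : R)
    (hmonic : ((∏ i, (X + C (q i))).comp (C (u : R) * X + C d)).Monic) :
    ∃ c : ι → R, (∏ i, (X + C (q i))).comp (C (u : R) * X + C d) = ∏ i, (X + C (c i)) := by
  set c : ι → R := fun i ↦ ↑u⁻¹ * (d + q i) with hc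
  have hcomp : (∏ i, (X + C (q i))).comp (C (u : R) * X + C d) =
      C ((u : R) ^ Fintype.card ι) * ∏ i, (X + C (c i)) := by
    have hfactor (i : ι) : (X + C (q i)).comp (C (u : R) * X + C d) =
        C (u : R) * (X + C (c i)) := by
      rw [hc, mul_add, ← C_mul, Units.mul_inv_cancel_left]
      simp [add_assoc]
    simp only [prod_comp, hfactor, Finset.prod_mul_distrib, Finset.prod_const, Finset.card_univ,
      C_pow]
  have hu : (u : R) ^ Fintype.card ι = 1 := by
    rw [hcomp, Monic, leadingCoeff_mul_monic (monic_prod_X_add_C c), leadingCoeff_C] at hmonic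
    exact hmonic
  exact ⟨c, by rw [hcomp, hu, C_1, one_mul]⟩

end ProdXAddC

theorem stmt16_general {f g : ℤ[X]} (hdeg : f.natDegree = g.natDegree)
    (hlead : |f.leadingCoeff| = |g.leadingCoeff|)
    (hcomp : ∀ (u : ℤˣ) (d : ℤ), f ≠ g.comp (C (u : ℤ) * X + C d)) :
    {p : ℤ × ℤ | f.eval p.1 = g.eval p.2}.Finite := by
  rcases Set.eq_empty_or_nonempty {p : ℤ × ℤ | f.eval p.1 = g.eval p.2}
    with hempty | ⟨⟨x₀, y₀⟩, h₀⟩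
  · exact hempty ▸ Set.finite_empty
  have hdeg0 : f.natDegree ≠ 0 := by
    intro hf0
    obtain ⟨a, rfl⟩ := natDegree_eq_zero.mp hf0
    obtain ⟨b, rfl⟩ := natDegree_eq_zero.mp (hdeg ▸ hf0)
    have hab : a = b := by simpa only [Set.mem_ofPred_eq, eval_C] using h₀
    exact hcomp 1 0 (by rw [C_comp, hab])
  obtain ⟨B, hB⟩ := exists_forall_abs_abs_sub_abs_le hdeg hdeg0 hlead
  refine (Set.finite_iUnion fun u : ℤˣ ↦ (Set.finite_Icc (-B) B).biUnion fun d _ ↦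
    finite_setOf_eval_eq_eval_on_graph (hcomp u d)).subset ?_
  rintro ⟨x, y⟩ hxy
  obtain ⟨u, hu⟩ := exists_unit_abs_sub_mul_eq_abs_abs_sub_abs x y
  have hmem : y - u * x ∈ Set.Icc (-B) B :=
    abs_le.mp (hu.trans_le (hB x y (congrArg abs hxy)))
  exact Set.mem_iUnion.mpr ⟨u, Set.mem_biUnion hmem ⟨hxy, by simp⟩⟩

theorem stmt16 (m : ℕ) (f : Polynomial ℤ) (hf : f.Monic) (hdeg : f.natDegree = m)
    (hroots : ¬ ∃ c : Fin m → ℤ, f = ∏ i, (X + C (c i)))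
    (q : Fin m → ℤ) :
    {p : ℤ × ℤ | 0 < p.1 ∧ 0 < p.2 ∧ (∏ i, (p.2 + q i)) = f.eval p.1}.Finite := by
  refine (stmt16_general (g := ∏ i, (X + C (q i))) ?_ ?_ fun u d hcomp ↦ hroots ?_).subset
    fun p hp ↦ by simpa [eval_prod] using hp.2.2.symm
  · rw [natDegree_prod_X_add_C, hdeg, Fintype.card_fin]
  · rw [hf.leadingCoeff, (monic_prod_X_add_C q).leadingCoeff]
  · exact hcomp ▸ exists_comp_eq_prod_X_add_C q u d (hcomp ▸ hf)
end

section
/- Assume the ABC-Conjecture. Let g ∈ ℤ[x] have degree greater than 2 and no repeated complex roots (i.e., g is separable). Then g(m) is a powerful number for only finitely many integers m; that is, the set of integers m such that every prime p dividing g(m) satisfies p² | g(m) is finite. -/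
open Polynomial

/-- The ABC-Conjecture: for every `ε > 0` there is a constant `C` such that for all
coprime positive integers `a`, `b`, `c` with `a + b = c`, we have
`c ≤ C * rad (a * b * c) ^ (1 + ε)`, where `rad n` is the product of the distinct
prime divisors of `n`. -/
def ABCConjecture : Prop :=
  ∀ ε : ℝ, 0 < ε → ∃ C : ℝ, ∀ a b c : ℕ, 0 < a → 0 < b → 0 < c →
    Nat.Coprime a b → a + b = c →
    (c : ℝ) ≤ C * ((∏ p ∈ (a * b * c).primeFactors, p : ℕ) : ℝ) ^ (1 + ε)

/-!
Following Belyi, there are `a, b ∈ ℤ[x]`, coprime over `ℚ`, such that every root of `g` is a root of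
`T = a * b * (a - b)` and `deg (rad T) ≤ deg a + 1`, the extremal case of Mason–Stothers; so `T` has
the same roots as `g * h` for some `h` with `deg g + deg h ≤ deg a + 1`. The ABC-Conjecture applied
to `b(m) + (a - b)(m) = a(m)`, where the common factors stay bounded, gives
`|m| ^ (deg a - ε) ≪ rad (T(m)) ≪ rad (g(m)) * |m| ^ deg h`, whence
`rad (g(m)) ≫ |m| ^ (deg g - 1 - ε)`. But if `g(m)` is powerful, then
`rad (g(m)) ^ 2 ≤ |g(m)| ≪ |m| ^ deg g`, which is impossible for large `|m|` when `deg g > 2`.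
-/

open Asymptotics Filter Lagrange UniqueFactorizationMonoid
open scoped Finset

section Wronskian

theorem coeff_X_mul_derivative {R : Type*} [CommSemiring R] (p : R[X]) (n : ℕ) :
    (X * derivative p).coeff n = n * p.coeff n := by
  cases n with
  | zero => simp
  | succ n => rw [coeff_X_mul, coeff_derivative, mul_comm, Nat.cast_succ]

theorem natDegree_X_mul_derivative_le {R : Type*} [CommSemiring R] (p : R[X]) :
    (X * derivative p).natDegree ≤ p.natDegree :=
  natDegree_le_iff_coeff_eq_zero.mpr fun n hn => by
    rw [coeff_X_mul_derivative, coeff_eq_zero_of_natDegree_lt hn, mul_zero]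

theorem natDegree_add_natDegree_le_natDegree_wronskian_add_one {R : Type*} [CommRing R] [IsDomain R]
    [CharZero R] {a b : R[X]} (ha : a ≠ 0) (hb : b ≠ 0) (hab : a.natDegree ≠ b.natDegree) :
    a.natDegree + b.natDegree ≤ (wronskian a b).natDegree + 1 := by
  have hXW : X * wronskian a b = a * (X * derivative b) - X * derivative a * b := by
    rw [wronskian]; ring
  have hcoeff : (X * wronskian a b).coeff (a.natDegree + b.natDegree) =
      (b.natDegree - a.natDegree : R) * (a.leadingCoeff * b.leadingCoeff) := by
    rw [hXW, coeff_sub, coeff_mul_add_eq_of_natDegree_le le_rfl (natDegree_X_mul_derivative_le b),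
      coeff_mul_add_eq_of_natDegree_le (natDegree_X_mul_derivative_le a) le_rfl,
      coeff_X_mul_derivative, coeff_X_mul_derivative]
    simp only [coeff_natDegree]
    ring
  have hne : (X * wronskian a b).coeff (a.natDegree + b.natDegree) ≠ 0 := by
    rw [hcoeff]
    exact mul_ne_zero (sub_ne_zero.mpr (mod_cast hab.symm))
      (mul_ne_zero (leadingCoeff_ne_zero.mpr ha) (leadingCoeff_ne_zero.mpr hb))
  calc a.natDegree + b.natDegree
    _ ≤ (X * wronskian a b).natDegree := le_natDegree_of_ne_zero hne
    _ ≤ (wronskian a b).natDegree + 1 := by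
      rw [add_comm]; exact natDegree_mul_le.trans (Nat.add_le_add_right natDegree_X_le _)

theorem wronskian_sub_left {R : Type*} [CommRing R] (a b : R[X]) :
    wronskian (a - b) b = wronskian a b := by
  simp only [wronskian, derivative_sub]; ring

theorem wronskian_comp {R : Type*} [CommRing R] (a b f : R[X]) :
    wronskian (a.comp f) (b.comp f) = derivative f * (wronskian a b).comp f := by
  simp only [wronskian, derivative_comp, sub_comp, mul_comp]; ring

theorem mul_mul_sub_ne_zero_of_wronskian_ne_zero {R : Type*} [CommRing R] [IsDomain R] {a b : R[X]}
    (hW : wronskian a b ≠ 0) : a * b * (a - b) ≠ 0 := by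
  refine mul_ne_zero (mul_ne_zero ?_ ?_) (sub_ne_zero.mpr ?_) <;> rintro rfl
  · exact hW (wronskian_zero_left b)
  · exact hW (wronskian_zero_right a)
  · exact hW (wronskian_self_eq_zero a)

variable {k : Type*} [Field k] [CharZero k] {a b p : k[X]}

theorem pow_succ_dvd_of_pow_dvd_derivative (hp : Prime p) {n : ℕ} (ha : p ^ (n + 1) ∣ a)
    (ha' : p ^ (n + 1) ∣ derivative a) : p ^ (n + 2) ∣ a := by
  obtain ⟨q, rfl⟩ := ha
  have hpp' : ¬ p ∣ derivative p := fun h =>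
    hp.not_isUnit (hp.irreducible.separable.isUnit_of_dvd' dvd_rfl h)
  have hlead : p ^ n * p ∣ p ^ n * (((n + 1 : ℕ) : k[X]) * derivative p * q) := by
    rw [← pow_succ, ← dvd_add_left (dvd_mul_right (p ^ (n + 1)) (derivative q))]
    convert ha' using 1
    rw [derivative_mul, derivative_pow_succ]
    push_cast
    simp only [map_add, map_natCast, map_one]
    ring
  have hunit : IsUnit ((n + 1 : ℕ) : k[X]) := by
    rw [← map_natCast (C : k →+* k[X])]
    exact isUnit_C.mpr (Nat.cast_ne_zero.mpr n.succ_ne_zero).isUnit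
  have hpq : p ∣ derivative p * q := by
    rw [mul_dvd_mul_iff_left (pow_ne_zero n hp.ne_zero), mul_assoc] at hlead
    exact hunit.dvd_mul_left.mp hlead
  rw [pow_succ p (n + 1)]
  exact mul_dvd_mul_left _ ((hp.dvd_or_dvd hpq).resolve_left hpp')

theorem pow_succ_dvd_of_pow_dvd_wronskian (hp : Prime p) (hab : IsCoprime a b) (hpa : p ∣ a) :
    ∀ {n : ℕ}, p ^ n ∣ wronskian a b → p ^ (n + 1) ∣ a
  | 0, _ => by simpa using hpa
  | n + 1, hW => by
    have ha : p ^ (n + 1) ∣ a :=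
      pow_succ_dvd_of_pow_dvd_wronskian hp hab hpa ((pow_dvd_pow p n.le_succ).trans hW)
    have hpb : IsCoprime (p ^ (n + 1)) b := (hab.of_isCoprime_of_dvd_left hpa).pow_left
    have hda : p ^ (n + 1) ∣ derivative a * b := by
      rw [← dvd_sub_right (ha.mul_right (derivative b))]
      exact hW
    exact pow_succ_dvd_of_pow_dvd_derivative hp ha (hpb.dvd_of_dvd_mul_right hda)

theorem pow_succ_dvd_mul_sub_of_pow_dvd_wronskian (hp : Prime p) (hab : IsCoprime a b)
    (hpT : p ∣ a * b * (a - b)) {n : ℕ} (hW : p ^ n ∣ wronskian a b) :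
    p ^ (n + 1) ∣ a * b * (a - b) := by
  rcases hp.dvd_or_dvd hpT with hpab | hpc
  · rcases hp.dvd_or_dvd hpab with hpa | hpb
    · exact ((pow_succ_dvd_of_pow_dvd_wronskian hp hab hpa hW).mul_right b).mul_right _
    · rw [← wronskian_neg_eq, dvd_neg] at hW
      exact ((pow_succ_dvd_of_pow_dvd_wronskian hp hab.symm hpb hW).mul_left a).mul_right _
  · rw [← wronskian_sub_left] at hW
    have hcb : IsCoprime (a - b) b := by
      simpa [sub_eq_add_neg] using hab.add_mul_right_left (-1)
    exact (pow_succ_dvd_of_pow_dvd_wronskian hp hcb hpc hW).mul_left _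

variable [DecidableEq k]

theorem wronskian_mul_radical_dvd (hab : IsCoprime a b) (hW₀ : wronskian a b ≠ 0) {N : ℕ}
    (hW : wronskian a b ∣ (a * b * (a - b)) ^ N) :
    wronskian a b * radical (a * b * (a - b)) ∣ a * b * (a - b) := by
  rw [dvd_iff_emultiplicity_le (mul_ne_zero hW₀ radical_ne_zero)]
  refine fun p hp => emultiplicity_le_emultiplicity_iff.mpr fun n hn => ?_
  rcases n with _ | n
  · simp
  have hpT : p ∣ a * b * (a - b) := by
    rcases hp.dvd_or_dvd ((dvd_pow_self p n.succ_ne_zero).trans hn) with h | h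
    · exact hp.dvd_of_dvd_pow (h.trans hW)
    · exact h.trans radical_dvd_self
  refine pow_succ_dvd_mul_sub_of_pow_dvd_wronskian hp hab hpT ?_
  by_cases hT : a * b * (a - b) = 0
  · simp only [hT, radical_zero, mul_one] at hn
    exact (pow_dvd_pow p n.le_succ).trans hn
  obtain ⟨r, hr⟩ := (dvd_radical_iff_of_irreducible hp.irreducible hT).mpr hpT
  have hpr : ¬ p ∣ r := fun ⟨s, hs⟩ => hp.not_isUnit <|
    squarefree_radical (a := a * b * (a - b)) p ⟨s, by rw [hr, hs, mul_assoc]⟩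
  rw [hr, mul_left_comm, pow_succ', mul_dvd_mul_iff_left hp.ne_zero] at hn
  exact hp.pow_dvd_of_dvd_mul_right n hpr hn

theorem natDegree_radical_le_of_wronskian_dvd (hab : IsCoprime a b)
    (hdeg : a.natDegree = b.natDegree) (hlead : a.leadingCoeff = b.leadingCoeff)
    (hW₀ : wronskian a b ≠ 0) {N : ℕ} (hW : wronskian a b ∣ (a * b * (a - b)) ^ N) :
    (radical (a * b * (a - b))).natDegree ≤ a.natDegree + 1 := by
  have hT := mul_mul_sub_ne_zero_of_wronskian_ne_zero hW₀
  obtain ⟨⟨ha, hb⟩, hc⟩ : (a ≠ 0 ∧ b ≠ 0) ∧ a - b ≠ 0 := by simpa only [mul_ne_zero_iff] using hT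
  have hcb : (a - b).natDegree < b.natDegree := hdeg ▸ natDegree_lt_natDegree hc
    (degree_sub_lt_left (by rw [degree_eq_natDegree ha, degree_eq_natDegree hb, hdeg]) ha hlead)
  have hWdeg := natDegree_add_natDegree_le_natDegree_wronskian_add_one hc hb hcb.ne
  rw [wronskian_sub_left] at hWdeg
  have hrad := natDegree_le_of_dvd (wronskian_mul_radical_dvd hab hW₀ hW) hT
  rw [natDegree_mul hW₀ radical_ne_zero, natDegree_mul (mul_ne_zero ha hb) hc,
    natDegree_mul ha hb] at hrad
  omega

end Wronskian

section Belyi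

theorem nodal_dvd_nodal_of_subset {k : Type*} [CommRing k] {s t : Finset k} (hst : s ⊆ t) :
    nodal s id ∣ nodal t id :=
  Finset.prod_dvd_prod_of_subset _ _ _ hst

theorem comp_dvd_comp {k : Type*} [CommSemiring k] {p q : k[X]} (hpq : p ∣ q) (f : k[X]) :
    p.comp f ∣ q.comp f :=
  map_dvd (compRingHom f) hpq

theorem dvd_comp_sub_C_eval_zero {k : Type*} [CommRing k] (f g : k[X]) :
    g ∣ f.comp g - C (f.eval 0) := by
  have hX : X ∣ f - C (f.eval 0) := by
    rw [X_dvd_iff, coeff_sub, coeff_C_zero, coeff_zero_eq_eval_zero, sub_self]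
  simpa using comp_dvd_comp hX g

theorem exists_ne_zero_natDegree_le_dvd_comp {k : Type*} [Field k] {p : k[X]} (hp : p ≠ 0)
    (q : k[X]) : ∃ r : k[X], r ≠ 0 ∧ r.natDegree ≤ p.natDegree ∧ p ∣ r.comp q := by
  have : Module.Finite k (AdjoinRoot p) := (AdjoinRoot.powerBasis hp).finite
  refine ⟨minpoly k (AdjoinRoot.mk p q), minpoly.ne_zero (Algebra.IsIntegral.isIntegral _), ?_, ?_⟩
  · simpa [(AdjoinRoot.powerBasis hp).finrank] using
      minpoly.natDegree_le (A := k) (AdjoinRoot.mk p q)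
  · rw [← AdjoinRoot.mk_eq_zero, ← minpoly.aeval k (AdjoinRoot.mk p q), comp, aeval_def, hom_eval₂]
    rfl

-- Belyi's reduction: the critical values of `g` are roots of a rational polynomial `q` of degree
-- less than `deg g`, to which the induction applies, and then all roots of `g` share one value.
theorem exists_mul_derivative_dvd_nodal_comp_pow {k : Type*} [Field k] [CharZero k] {g : k[X]}
    (hg : g ≠ 0) : ∃ f : k[X], f.natDegree ≠ 0 ∧ ∃ (s : Finset k) (N : ℕ),
      g * derivative f ∣ (nodal s id).comp f ^ N := by
  classical
  induction hn : g.natDegree using Nat.strong_induction_on generalizing g with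
  | _ n ih =>
  subst hn
  by_cases hdeg : g.natDegree = 0
  · refine ⟨X, by simp, ∅, 0, ?_⟩
    rw [derivative_X, mul_one, pow_zero]
    exact isUnit_iff_dvd_one.mp (isUnit_iff_degree_eq_zero.mpr
      (by rw [degree_eq_natDegree hg, hdeg, Nat.cast_zero]))
  have hg' : derivative g ≠ 0 := fun h => hdeg (derivative_eq_zero.mp h)
  obtain ⟨q, hq, hqdeg, hdvdq⟩ := exists_ne_zero_natDegree_le_dvd_comp hg' g
  obtain ⟨f, hf, s, N, hdvd⟩ := ih _ (hqdeg.trans_lt (natDegree_derivative_lt hdeg)) hq rfl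
  have hderiv : derivative (f.comp g) ∣ (nodal s id).comp (f.comp g) ^ N := by
    rw [derivative_comp, ← comp_assoc, ← pow_comp]
    refine (mul_dvd_mul_right hdvdq _).trans ?_
    rw [← mul_comp]
    exact comp_dvd_comp hdvd g
  have hsubset : (nodal s id).comp (f.comp g) ∣ (nodal (insert (f.eval 0) s) id).comp (f.comp g) :=
    comp_dvd_comp (nodal_dvd_nodal_of_subset (Finset.subset_insert _ s)) _
  have hg_dvd : g ∣ (nodal (insert (f.eval 0) s) id).comp (f.comp g) := by
    refine (dvd_comp_sub_C_eval_zero f g).trans ?_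
    simpa using comp_dvd_comp (X_sub_C_dvd_nodal id (Finset.mem_insert_self (f.eval 0) s))
      (f.comp g)
  refine ⟨f.comp g, by simp [natDegree_comp, hf, hdeg], insert (f.eval 0) s, N + 1, ?_⟩
  rw [pow_succ, mul_comm g]
  exact mul_dvd_mul (hderiv.trans (pow_dvd_pow_of_dvd hsubset N)) hg_dvd

theorem sum_nodalWeight_eq_zero {k ι : Type*} [Field k] [DecidableEq ι] {s : Finset ι} {v : ι → k}
    (hv : Set.InjOn v s) (hs : 2 ≤ #s) : ∑ i ∈ s, nodalWeight s v i = 0 := by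
  have h := coeff_eq_sum hv (P := 1) (by rw [degree_one]; exact_mod_cast (by omega : 0 < #s))
  rw [coeff_one, if_neg (by omega)] at h
  simpa [nodalWeight] using h.symm

theorem sum_nodalWeight_mul_nodal_erase {k ι : Type*} [Field k] [DecidableEq ι] {s : Finset ι}
    {v : ι → k} (hv : Set.InjOn v s) (hs : s.Nonempty) :
    ∑ i ∈ s, C (nodalWeight s v i) * nodal (s.erase i) v = 1 := by
  rw [← sum_basis hv hs]
  refine Finset.sum_congr rfl fun i hi => ?_
  rw [basis_eq_prod_sub_inv_mul_nodal_div hi, nodal_erase_eq_nodal_div hi]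

theorem derivative_prod_X_sub_C_pow_mul_nodal {k ι : Type*} [CommRing k] [DecidableEq ι]
    (s : Finset ι) (v : ι → k) (e : ι → ℕ) :
    derivative (∏ i ∈ s, (X - C (v i)) ^ e i) * nodal s v =
      (∏ i ∈ s, (X - C (v i)) ^ e i) * ∑ i ∈ s, C (e i : k) * nodal (s.erase i) v := by
  have hpow (x : k) (n : ℕ) :
      derivative ((X - C x) ^ n) * (X - C x) = C (n : k) * (X - C x) ^ n := by
    cases n with
    | zero => simp
    | succ n => simp only [derivative_X_sub_C_pow, Nat.add_sub_cancel]; ring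
  rw [derivative_prod_finset, Finset.sum_mul, Finset.mul_sum]
  refine Finset.sum_congr rfl fun i hi => ?_
  rw [nodal_eq_mul_nodal_erase hi, ← Finset.mul_prod_erase s (fun i => (X - C (v i)) ^ e i) hi]
  linear_combination (∏ j ∈ s.erase i, (X - C (v j)) ^ e j) * nodal (s.erase i) v * hpow (v i) (e i)

theorem wronskian_prod_X_sub_C_pow_mul_nodal {k ι : Type*} [CommRing k] [DecidableEq ι]
    (s : Finset ι) (v : ι → k) (d e : ι → ℕ) :
    wronskian (∏ i ∈ s, (X - C (v i)) ^ d i) (∏ i ∈ s, (X - C (v i)) ^ e i) * nodal s v =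
      (∏ i ∈ s, (X - C (v i)) ^ d i) * (∏ i ∈ s, (X - C (v i)) ^ e i) *
        ∑ i ∈ s, C (e i - d i : k) * nodal (s.erase i) v := by
  simp only [wronskian, C_sub, sub_mul, Finset.sum_sub_distrib]
  linear_combination (∏ i ∈ s, (X - C (v i)) ^ d i) * derivative_prod_X_sub_C_pow_mul_nodal s v e -
    (∏ i ∈ s, (X - C (v i)) ^ e i) * derivative_prod_X_sub_C_pow_mul_nodal s v d

theorem isCoprime_prod_X_sub_C_pow {k ι : Type*} [Field k] {s : Finset ι} {v : ι → k}
    (hv : Set.InjOn v s) {d e : ι → ℕ} (hde : ∀ i ∈ s, d i = 0 ∨ e i = 0) :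
    IsCoprime (∏ i ∈ s, (X - C (v i)) ^ d i) (∏ i ∈ s, (X - C (v i)) ^ e i) := by
  refine IsCoprime.prod_left fun i hi => IsCoprime.prod_right fun j hj => ?_
  rcases eq_or_ne i j with rfl | hij
  · rcases hde i hi with h | h <;> simp only [h, pow_zero, isCoprime_one_left, isCoprime_one_right]
  · exact (isCoprime_X_sub_C_of_isUnit_sub
      (sub_ne_zero.mpr (hv.ne hi hj hij)).isUnit).pow

theorem natDegree_prod_X_sub_C_pow {k ι : Type*} [CommRing k] [Nontrivial k] (s : Finset ι)
    (v : ι → k) (e : ι → ℕ) : (∏ i ∈ s, (X - C (v i)) ^ e i).natDegree = ∑ i ∈ s, e i := by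
  rw [natDegree_prod_of_monic _ _ fun i _ => (monic_X_sub_C (v i)).pow _]
  simp only [(monic_X_sub_C _).natDegree_pow, natDegree_X_sub_C, mul_one]

theorem exists_int_eq_mul_nodalWeight (s : Finset ℚ) :
    ∃ (D : ℤ) (r : ℚ → ℤ), D ≠ 0 ∧ ∀ i ∈ s, (r i : ℚ) = D * nodalWeight s id i := by
  obtain ⟨⟨D, hD⟩, hDs⟩ := IsLocalization.exist_integer_multiples (nonZeroDivisors ℤ) s
    (nodalWeight s id)
  choose! r hr using hDs
  exact ⟨D, r, nonZeroDivisors.ne_zero hD, fun i hi => by simpa [Submonoid.smul_def] using hr i hi⟩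

-- With `A / B = ∏ (X - i) ^ r i`, the logarithmic derivative is `∑ r i / (X - i)`. Taking `r i`
-- proportional to `nodalWeight s id i` turns this sum into a constant multiple of `1 / nodal s id`.
theorem exists_wronskian_mul_nodal_eq_C_mul {s : Finset ℚ} (hs : 2 ≤ #s) :
    ∃ A B : ℚ[X], A.Monic ∧ B.Monic ∧ A.natDegree = B.natDegree ∧ IsCoprime A B ∧
      ∃ c : ℚ, c ≠ 0 ∧ wronskian A B * nodal s id = C c * (A * B) := by
  obtain ⟨D, r, hD, hr⟩ := exists_int_eq_mul_nodalWeight s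
  have hsum : ∑ i ∈ s, r i = 0 := by
    have h : ∑ i ∈ s, (r i : ℚ) = 0 := by
      rw [Finset.sum_congr rfl hr, ← Finset.mul_sum,
        sum_nodalWeight_eq_zero Function.injective_id.injOn hs, mul_zero]
    exact_mod_cast h
  have hmonic (e : ℚ → ℕ) : (∏ i ∈ s, (X - C (id i)) ^ e i).Monic :=
    monic_prod_of_monic _ _ fun i _ => (monic_X_sub_C (id i)).pow _
  refine ⟨∏ i ∈ s, (X - C (id i)) ^ (r i).toNat, ∏ i ∈ s, (X - C (id i)) ^ (-r i).toNat,
    hmonic _, hmonic _, ?_,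
    isCoprime_prod_X_sub_C_pow Function.injective_id.injOn fun i _ => by omega,
    -D, neg_ne_zero.mpr (Int.cast_ne_zero.mpr hD), ?_⟩
  · rw [natDegree_prod_X_sub_C_pow, natDegree_prod_X_sub_C_pow]
    zify
    rw [← sub_eq_zero, ← Finset.sum_sub_distrib, ← hsum]
    exact Finset.sum_congr rfl fun i _ => Int.toNat_sub_toNat_neg (r i)
  · have hweight : ∑ i ∈ s, C (((-r i).toNat : ℚ) - ((r i).toNat : ℚ)) * nodal (s.erase i) id =
        C (-D : ℚ) := by
      rw [← mul_one (C (-D : ℚ)), ← sum_nodalWeight_mul_nodal_erase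
        (Function.injective_id.injOn (s := (s : Set ℚ))) (Finset.card_pos.mp (by omega)),
        Finset.mul_sum]
      refine Finset.sum_congr rfl fun i hi => ?_
      have hri : ((-r i).toNat : ℚ) - ((r i).toNat : ℚ) = -r i := by
        exact_mod_cast (by omega : ((-r i).toNat : ℤ) - (r i).toNat = -r i)
      rw [hri, hr i hi, ← neg_mul, C_mul, mul_assoc]
    rw [wronskian_prod_X_sub_C_pow_mul_nodal, hweight, mul_comm]

theorem exists_isCoprime_dvd_pow_natDegree_radical_le {g : ℚ[X]} (hg : g ≠ 0) :
    ∃ a b : ℚ[X], IsCoprime a b ∧ a * b * (a - b) ≠ 0 ∧ (∃ N : ℕ, g ∣ (a * b * (a - b)) ^ N) ∧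
      (radical (a * b * (a - b))).natDegree ≤ a.natDegree + 1 := by
  obtain ⟨f, hf, s₀, N, hdvd₀⟩ := exists_mul_derivative_dvd_nodal_comp_pow hg
  obtain ⟨s, hs₀, hs⟩ := Infinite.exists_superset_card_eq s₀ (#s₀ + 2) (by omega)
  obtain ⟨A, B, hA, hB, hdeg, hcop, c, hc, hW⟩ :=
    exists_wronskian_mul_nodal_eq_C_mul (s := s) (by omega)
  have hdvd_comp {p : ℚ[X]} (hp : p ∣ C c * (A * B)) :
      p.comp f ∣ A.comp f * B.comp f * (A.comp f - B.comp f) := by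
    have hpAB : p ∣ A * B := (isUnit_C.mpr hc.isUnit).dvd_mul_left.mp hp
    rw [← mul_comp]
    exact (comp_dvd_comp hpAB f).mul_right _
  have hdvd : g * derivative f ∣ (A.comp f * B.comp f * (A.comp f - B.comp f)) ^ N :=
    hdvd₀.trans <| pow_dvd_pow_of_dvd ((comp_dvd_comp (nodal_dvd_nodal_of_subset hs₀) f).trans
      (hdvd_comp (hW ▸ dvd_mul_left _ _))) N
  have hWdvd : wronskian (A.comp f) (B.comp f) ∣
      (A.comp f * B.comp f * (A.comp f - B.comp f)) ^ (N + 1) := by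
    rw [wronskian_comp, pow_succ]
    exact mul_dvd_mul (dvd_of_mul_left_dvd hdvd) (hdvd_comp (hW ▸ dvd_mul_right _ _))
  have hW₀ : wronskian (A.comp f) (B.comp f) ≠ 0 := by
    have hAB : C c * (A * B) ≠ 0 := mul_ne_zero (C_ne_zero.mpr hc) (hA.mul hB).ne_zero
    rw [wronskian_comp]
    refine mul_ne_zero (mt derivative_eq_zero.mp hf) (mt comp_eq_zero_iff.mp (not_or.mpr ⟨?_, ?_⟩))
    · exact left_ne_zero_of_mul (hW ▸ hAB)
    · exact fun h => hf (by rw [h.2, natDegree_C])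
  have hcop_comp : IsCoprime (A.comp f) (B.comp f) := hcop.map (compRingHom f)
  refine ⟨A.comp f, B.comp f, hcop_comp, mul_mul_sub_ne_zero_of_wronskian_ne_zero hW₀,
    ⟨N, dvd_of_mul_right_dvd hdvd⟩, natDegree_radical_le_of_wronskian_dvd hcop_comp ?_ ?_ hW₀ hWdvd⟩
  · rw [natDegree_comp, natDegree_comp, hdeg]
  · rw [leadingCoeff_comp hf, leadingCoeff_comp hf, hA.leadingCoeff, hB.leadingCoeff, hdeg]

end Belyi

section ClearDenominators

variable {R K : Type*} [CommRing R] [IsDomain R] [Field K] [Algebra R K] [IsFractionRing R K]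

theorem exists_map_eq_C_mul (p : K[X]) :
    ∃ (p' : R[X]) (c : R), c ≠ 0 ∧ p'.map (algebraMap R K) = C (algebraMap R K c) * p := by
  obtain ⟨c, hc, hp⟩ := IsLocalization.integerNormalization_spec (nonZeroDivisors R) p
  exact ⟨_, c, nonZeroDivisors.ne_zero hc, by rw [hp, algebra_compatible_smul K, smul_eq_C_mul]⟩

theorem exists_map_eq_C_mul_pair (p q : K[X]) :
    ∃ (p' q' : R[X]) (c : R), c ≠ 0 ∧ p'.map (algebraMap R K) = C (algebraMap R K c) * p ∧
      q'.map (algebraMap R K) = C (algebraMap R K c) * q := by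
  obtain ⟨p', c, hc, hp⟩ := exists_map_eq_C_mul (R := R) p
  obtain ⟨q', d, hd, hq⟩ := exists_map_eq_C_mul (R := R) q
  refine ⟨C d * p', C c * q', c * d, mul_ne_zero hc hd, ?_, ?_⟩
  · rw [Polynomial.map_mul, map_C, hp, map_mul, C_mul]; ring
  · rw [Polynomial.map_mul, map_C, hq, map_mul, C_mul]; ring

theorem exists_dvd_C_mul_of_map_dvd_map {p q : R[X]}
    (h : p.map (algebraMap R K) ∣ q.map (algebraMap R K)) : ∃ c : R, c ≠ 0 ∧ p ∣ C c * q := by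
  obtain ⟨r, hr⟩ := h
  obtain ⟨r', c, hc, hr'⟩ := exists_map_eq_C_mul (R := R) r
  refine ⟨c, hc, r', map_injective _ (IsFractionRing.injective R K) ?_⟩
  rw [Polynomial.map_mul, Polynomial.map_mul, map_C, hr, hr']
  ring

theorem exists_mul_add_mul_eq_C_of_isCoprime_map {p q : R[X]}
    (h : IsCoprime (p.map (algebraMap R K)) (q.map (algebraMap R K))) :
    ∃ (u v : R[X]) (c : R), c ≠ 0 ∧ u * p + v * q = C c := by
  obtain ⟨u, v, huv⟩ := h
  obtain ⟨u', v', c, hc, hu, hv⟩ := exists_map_eq_C_mul_pair (R := R) u v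
  refine ⟨u', v', c, hc, map_injective _ (IsFractionRing.injective R K) ?_⟩
  rw [Polynomial.map_add, Polynomial.map_mul, Polynomial.map_mul, map_C, hu, hv]
  linear_combination C (algebraMap R K c) * huv

end ClearDenominators

theorem exists_isCoprime_dvd_mul_pow_of_squarefree {g : ℚ[X]} (hg : Squarefree g) :
    ∃ a b h : ℚ[X], IsCoprime a b ∧ a * b * (a - b) ≠ 0 ∧ h ≠ 0 ∧
      (∃ N : ℕ, a * b * (a - b) ∣ (g * h) ^ N) ∧ h.natDegree + g.natDegree ≤ a.natDegree + 1 := by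
  obtain ⟨a, b, hab, hT, ⟨N, hN⟩, hdeg⟩ := exists_isCoprime_dvd_pow_natDegree_radical_le hg.ne_zero
  obtain ⟨h, hh⟩ := (dvd_radical_iff hg.isRadical hT).mpr (hg.isRadical N _ hN)
  have hgh : g * h ≠ 0 := hh ▸ radical_ne_zero
  refine ⟨a, b, h, hab, hT, right_ne_zero_of_mul hgh, hh ▸ exists_dvd_radical_self_pow hT, ?_⟩
  rwa [add_comm, ← natDegree_mul hg.ne_zero (right_ne_zero_of_mul hgh), ← hh]

theorem exists_isCoprime_map_dvd_mul_pow_of_squarefree_map {g : ℤ[X]}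
    (hg : Squarefree (g.map (algebraMap ℤ ℚ))) :
    ∃ a b h : ℤ[X], IsCoprime (a.map (algebraMap ℤ ℚ)) (b.map (algebraMap ℤ ℚ)) ∧
      a * b * (a - b) ≠ 0 ∧ h ≠ 0 ∧
      (∃ (c : ℤ) (N : ℕ), c ≠ 0 ∧ a * b * (a - b) ∣ C c * (g * h) ^ N) ∧
      h.natDegree + g.natDegree ≤ a.natDegree + 1 := by
  have hinj : Function.Injective (algebraMap ℤ ℚ) := IsFractionRing.injective ℤ ℚ
  obtain ⟨a, b, h, hab, hT, hh, ⟨N, hN⟩, hdeg⟩ := exists_isCoprime_dvd_mul_pow_of_squarefree hg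
  obtain ⟨a', b', c, hc, ha', hb'⟩ := exists_map_eq_C_mul_pair (R := ℤ) a b
  obtain ⟨h', d, hd, hh'⟩ := exists_map_eq_C_mul (R := ℤ) h
  have hunit {z : ℤ} (hz : z ≠ 0) : IsUnit (C (algebraMap ℤ ℚ z)) :=
    isUnit_C.mpr ((map_ne_zero_iff _ hinj).mpr hz).isUnit
  have hT' : (a' * b' * (a' - b')).map (algebraMap ℤ ℚ) =
      C (algebraMap ℤ ℚ c) ^ 3 * (a * b * (a - b)) := by
    rw [Polynomial.map_mul, Polynomial.map_mul, Polynomial.map_sub, ha', hb']; ring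
  have hdvd : (a' * b' * (a' - b')).map (algebraMap ℤ ℚ) ∣ ((g * h') ^ N).map (algebraMap ℤ ℚ) := by
    rw [hT', ((hunit hc).pow 3).mul_left_dvd, Polynomial.map_pow, Polynomial.map_mul, hh',
      mul_left_comm, mul_pow]
    exact hN.mul_left _
  have hnatDegree {p' : ℤ[X]} {p : ℚ[X]} {z : ℤ} (hz : z ≠ 0)
      (hp : p'.map (algebraMap ℤ ℚ) = C (algebraMap ℤ ℚ z) * p) : p'.natDegree = p.natDegree := by
    rw [← natDegree_map_eq_of_injective hinj, hp, natDegree_C_mul ((map_ne_zero_iff _ hinj).mpr hz)]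
  refine ⟨a', b', h', ?_, fun h₀ => ?_, fun h₀ => ?_, ?_, ?_⟩
  · rw [ha', hb']
    exact (isCoprime_mul_unit_left (hunit hc) a b).mpr hab
  · rw [h₀, Polynomial.map_zero, eq_comm, ((hunit hc).pow 3).mul_right_eq_zero] at hT'
    exact hT hT'
  · rw [h₀, Polynomial.map_zero, eq_comm, (hunit hd).mul_right_eq_zero] at hh'
    exact hh hh'
  · obtain ⟨e, he, hdvd⟩ := exists_dvd_C_mul_of_map_dvd_map hdvd
    exact ⟨e, N, he, hdvd⟩
  · rwa [hnatDegree hc ha', hnatDegree hd hh', ← natDegree_map_eq_of_injective hinj g]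

section Radical

variable {M : Type*} [CommMonoidWithZero M] [NormalizationMonoid M] [UniqueFactorizationMonoid M]

theorem radical_dvd_mul_of_dvd_mul_pow [Nontrivial M] {a c g h : M} {N : ℕ} (hc : c ≠ 0)
    (hg : g ≠ 0) (hh : h ≠ 0) (ha : a ∣ c * (g * h) ^ N) : radical a ∣ c * (radical g * h) :=
  calc radical a
    _ ∣ radical (c * (g * h) ^ N) :=
      radical_dvd_radical ha (mul_ne_zero hc (pow_ne_zero N (mul_ne_zero hg hh)))
    _ ∣ radical c * radical (g * h) :=
      radical_mul_dvd.trans (mul_dvd_mul_left _ radical_pow_dvd)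
    _ ∣ c * (radical g * h) :=
      mul_dvd_mul radical_dvd_self (radical_mul_dvd.trans (mul_dvd_mul_left _ radical_dvd_self))

theorem radical_sq_dvd {a : M} (ha : ∀ p, Prime p → p ∣ a → p ^ 2 ∣ a) : radical a ^ 2 ∣ a := by
  rw [radical, ← Finset.prod_pow]
  refine Finset.prod_dvd_of_isRelPrime (fun p hp q hq hpq => ?_) fun p hp => ?_
  · exact (pairwise_primeFactors_isRelPrime hp hq hpq).pow
  · have hp := mem_primeFactors.mp hp
    exact ha p (prime_of_normalized_factor p hp) (dvd_of_mem_normalizedFactors hp)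

end Radical

theorem ABCConjecture.exists_add_le (abc : ABCConjecture) {ε : ℝ} (hε : 0 < ε) :
    ∃ C : ℝ, 0 ≤ C ∧ ∀ a b : ℕ, a ≠ 0 → b ≠ 0 → a.Coprime b →
      (a + b : ℝ) ≤ C * ((radical (a * b * (a + b)) : ℕ) : ℝ) ^ (1 + ε) := by
  obtain ⟨C, hC⟩ := abc ε hε
  refine ⟨max C 0, le_max_right C 0, fun a b ha hb hab => ?_⟩
  have h := hC a b (a + b) (by omega) (by omega) (by omega) hab rfl
  rw [← Nat.radical_eq_prod_primeFactors, Nat.cast_add] at h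
  exact h.trans (by gcongr; exact le_max_left C 0)

theorem ABCConjecture.exists_abs_le_of_isCoprime (abc : ABCConjecture) {ε : ℝ} (hε : 0 < ε) :
    ∃ C : ℝ, 0 ≤ C ∧ ∀ x y : ℤ, IsCoprime x y → x * y * (x - y) ≠ 0 →
      |(x : ℝ)| ≤ C * ((radical (x * y * (x - y)) : ℤ) : ℝ) ^ (1 + ε) := by
  obtain ⟨C, hC₀, hC⟩ := abc.exists_add_le hε
  refine ⟨C, hC₀, fun x y hxy hne => ?_⟩
  obtain ⟨⟨hx, hy⟩, hz⟩ : (x ≠ 0 ∧ y ≠ 0) ∧ x - y ≠ 0 := by simpa only [mul_ne_zero_iff] using hne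
  have hbound {u v : ℤ} (hu : u ≠ 0) (hv : v ≠ 0) (huv : IsCoprime u v)
      (hsum : u.natAbs * v.natAbs * (u.natAbs + v.natAbs) = (x * y * (x - y)).natAbs)
      (hle : x.natAbs ≤ u.natAbs + v.natAbs) :
      |(x : ℝ)| ≤ C * ((radical (x * y * (x - y)) : ℤ) : ℝ) ^ (1 + ε) := by
    have h := hC u.natAbs v.natAbs (Int.natAbs_ne_zero.mpr hu) (Int.natAbs_ne_zero.mpr hv)
      (Int.isCoprime_iff_nat_coprime.mp huv)
    rw [hsum, ← Nat.cast_add] at h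
    rw [← Int.radical_natAbs_eq_radical, Int.cast_natCast, ← Int.cast_abs, ← Nat.cast_natAbs]
    exact (Nat.cast_le.mpr hle).trans h
  have hxz : IsCoprime x (x - y) := by
    simpa [sub_eq_add_neg, add_comm] using hxy.neg_right.add_mul_left_right 1
  have hyz : IsCoprime y (x - y) := by
    simpa [sub_eq_add_neg] using hxy.symm.add_mul_left_right (-1)
  simp only [Int.natAbs_mul] at hbound
  obtain h | h | h : y.natAbs + (x - y).natAbs = x.natAbs ∨ x.natAbs + (x - y).natAbs = y.natAbs ∨
      x.natAbs + y.natAbs = (x - y).natAbs := by omega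
  · exact hbound hy hz hyz (by rw [h]; ring) h.ge
  · exact hbound hx hz hxz (by rw [h]; ring) (by omega)
  · exact hbound hx hy hxy (by rw [h]) (by omega)

theorem ABCConjecture.exists_abs_le_gcd_mul (abc : ABCConjecture) {ε : ℝ} (hε : 0 < ε) :
    ∃ C : ℝ, 0 ≤ C ∧ ∀ x y : ℤ, x * y * (x - y) ≠ 0 →
      |(x : ℝ)| ≤ C * x.gcd y * ((radical (x * y * (x - y)) : ℤ) : ℝ) ^ (1 + ε) := by
  obtain ⟨C, hC₀, hC⟩ := abc.exists_abs_le_of_isCoprime hε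
  refine ⟨C, hC₀, fun x y hne => ?_⟩
  have hx : x ≠ 0 := left_ne_zero_of_mul (left_ne_zero_of_mul hne)
  obtain ⟨x', y', hxy', hx', hy'⟩ := Int.exists_gcd_one (Int.gcd_pos_of_ne_zero_left y hx)
  generalize x.gcd y = d at hx' hy'
  subst hx' hy'
  have hdvd : x' * y' * (x' - y') ∣ x' * d * (y' * d) * (x' * d - y' * d) :=
    ⟨d ^ 3, by ring⟩
  have hrad : radical (x' * y' * (x' - y')) ≤ radical (x' * d * (y' * d) * (x' * d - y' * d)) :=
    Int.le_of_dvd (Int.radical_pos _) (radical_dvd_radical hdvd hne)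
  have h₀ : (0 : ℝ) ≤ radical (x' * y' * (x' - y')) := Int.cast_nonneg (Int.radical_pos _).le
  calc |((x' * d : ℤ) : ℝ)| = d * |(x' : ℝ)| := by
        rw [Int.cast_mul, Int.cast_natCast, abs_mul, Nat.abs_cast, mul_comm]
    _ ≤ d * (C * ((radical (x' * y' * (x' - y')) : ℤ) : ℝ) ^ (1 + ε)) := by
        gcongr
        exact hC x' y' (Int.isCoprime_iff_gcd_eq_one.mpr hxy') (ne_zero_of_dvd_ne_zero hne hdvd)
    _ ≤ d * (C * ((radical (x' * d * (y' * d) * (x' * d - y' * d)) : ℤ) : ℝ) ^ (1 + ε)) := by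
        gcongr
    _ = C * d * ((radical (x' * d * (y' * d) * (x' * d - y' * d)) : ℤ) : ℝ) ^ (1 + ε) := by ring

section Growth

theorem tendsto_abs_intCast_cofinite_atTop : Tendsto (fun m : ℤ => |(m : ℝ)|) cofinite atTop :=
  (tendsto_norm_cocompact_atTop (E := ℝ)).comp Int.tendsto_coe_cofinite

theorem isLittleO_rpow_rpow_atTop {p q : ℝ} (hpq : p < q) :
    (fun x : ℝ => x ^ p) =o[atTop] fun x => x ^ q := by
  refine (isLittleO_iff_tendsto' ?_).mpr ?_
  · filter_upwards [eventually_gt_atTop 0] with x hx h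
    exact absurd h (Real.rpow_pos_of_pos hx q).ne'
  · refine (tendsto_rpow_neg_atTop (sub_pos.mpr hpq)).congr' ?_
    filter_upwards [eventually_gt_atTop 0] with x hx
    rw [neg_sub, Real.rpow_sub hx]

theorem isBigO_of_isBigO_rpow {α : Type*} {l : Filter α} {u v : α → ℝ} {r : ℝ} (hr : 0 < r)
    (hu : 0 ≤ᶠ[l] u) (hv : 0 ≤ᶠ[l] v) (huv : (fun x => u x ^ r) =O[l] fun x => v x ^ r) :
    u =O[l] v := by
  refine (huv.rpow (inv_nonneg.mpr hr.le) ?_).congr' ?_ ?_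
  · filter_upwards [hv] with x hx using Real.rpow_nonneg hx r
  · filter_upwards [hu] with x hx using Real.rpow_rpow_inv hx hr.ne'
  · filter_upwards [hv] with x hx using Real.rpow_rpow_inv hx hr.ne'

theorem isTheta_intCast_eval {p : ℤ[X]} (hp : p ≠ 0) :
    (fun m : ℤ => ((p.eval m : ℤ) : ℝ)) =Θ[cofinite] fun m => |(m : ℝ)| ^ p.natDegree := by
  have hinj : Function.Injective (Int.castRingHom ℝ) := Int.cast_injective
  have htendsto : Tendsto ((↑) : ℤ → ℝ) cofinite (Bornology.cobounded ℝ) :=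
    Metric.cobounded_eq_cocompact (α := ℝ) ▸ Int.tendsto_coe_cofinite
  have h := ((p.map (Int.castRingHom ℝ)).isEquivalent_cobounded_leading_monomial.comp_tendsto
    htendsto).isTheta
  simp only [Function.comp_def, natDegree_map_eq_of_injective hinj, eval_intCast_map,
    eq_intCast] at h
  simp only [← abs_pow]
  exact ((isTheta_const_mul_right (leadingCoeff_ne_zero.mpr
    ((Polynomial.map_ne_zero_iff hinj).mpr hp))).mp h).trans (isTheta_norm_right.mpr isTheta_rfl)

theorem norm_intCast_le_of_dvd {x y : ℤ} (hxy : x ∣ y) (hy : y ≠ 0) :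
    ‖(x : ℝ)‖ ≤ ‖(y : ℝ)‖ := by
  rw [Real.norm_eq_abs, Real.norm_eq_abs, ← Int.cast_abs, ← Int.cast_abs, ← Nat.cast_natAbs,
    ← Nat.cast_natAbs]
  exact Nat.cast_le.mpr (Int.natAbs_le_of_dvd_ne_zero hxy hy)

theorem isBigO_radical_eval_of_dvd {c : ℤ} {g h t : ℤ[X]} {N : ℕ} (hc : c ≠ 0) (hg : g ≠ 0)
    (hh : h ≠ 0) (ht : t ∣ C c * (g * h) ^ N) :
    (fun m : ℤ => ((radical (t.eval m) : ℤ) : ℝ)) =O[cofinite]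
      fun m => ((radical (g.eval m) : ℤ) : ℝ) * ((h.eval m : ℤ) : ℝ) := by
  refine IsBigO.of_bound |(c : ℝ)| ?_
  filter_upwards [eventually_cofinite_not_isRoot hg, eventually_cofinite_not_isRoot hh]
    with m hgm hhm
  have hdvd : t.eval m ∣ c * (g.eval m * h.eval m) ^ N := by simpa using eval_dvd (x := m) ht
  have hne : c * (radical (g.eval m) * h.eval m) ≠ 0 :=
    mul_ne_zero hc (mul_ne_zero radical_ne_zero hhm)
  have hle := norm_intCast_le_of_dvd (radical_dvd_mul_of_dvd_mul_pow hc hgm hhm hdvd) hne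
  simpa only [Int.cast_mul, Real.norm_eq_abs, abs_mul, mul_assoc] using hle

end Growth

theorem ABCConjecture.isBigO_eval (abc : ABCConjecture) {ε : ℝ} (hε : 0 < ε) {a b : ℤ[X]}
    (hab : IsCoprime (a.map (algebraMap ℤ ℚ)) (b.map (algebraMap ℤ ℚ)))
    (hT : a * b * (a - b) ≠ 0) :
    (fun m : ℤ => ((a.eval m : ℤ) : ℝ)) =O[cofinite]
      fun m => ((radical ((a * b * (a - b)).eval m) : ℤ) : ℝ) ^ (1 + ε) := by
  obtain ⟨C', hC₀, hC'⟩ := abc.exists_abs_le_gcd_mul hε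
  obtain ⟨u, v, c, hc, huv⟩ := exists_mul_add_mul_eq_C_of_isCoprime_map hab
  refine IsBigO.of_bound (C' * c.natAbs) ?_
  filter_upwards [eventually_cofinite_not_isRoot hT] with m hm
  have hgcd : (a.eval m).gcd (b.eval m) ≤ c.natAbs := by
    refine Nat.le_of_dvd (Int.natAbs_pos.mpr hc) (Int.natCast_dvd.mp ?_)
    rw [← eval_C (a := c) (x := m), ← huv, eval_add, eval_mul, eval_mul]
    exact dvd_add ((Int.gcd_dvd_left _ _).mul_left _) ((Int.gcd_dvd_right _ _).mul_left _)
  have hrad : (0 : ℝ) ≤ ((radical ((a * b * (a - b)).eval m) : ℤ) : ℝ) :=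
    Int.cast_nonneg (Int.radical_pos _).le
  simp only [IsRoot, eval_mul, eval_sub] at hm hrad ⊢
  rw [Real.norm_eq_abs, Real.norm_of_nonneg (Real.rpow_nonneg hrad _)]
  exact (hC' _ _ hm).trans (by gcongr)

theorem exists_pos_sub_mul_one_add_le (n : ℕ) {ε : ℝ} (hε : 0 < ε) :
    ∃ δ : ℝ, 0 < δ ∧ (n - ε) * (1 + δ) ≤ n := by
  refine ⟨ε / (n + 1), by positivity, ?_⟩
  rw [one_add_div (by positivity), mul_div_assoc', div_le_iff₀ (by positivity)]
  nlinarith [sq_nonneg ε]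

theorem ABCConjecture.isBigO_eval_radical (abc : ABCConjecture) {ε : ℝ} (hε : 0 < ε)
    {a b : ℤ[X]} (hab : IsCoprime (a.map (algebraMap ℤ ℚ)) (b.map (algebraMap ℤ ℚ)))
    (hT : a * b * (a - b) ≠ 0) :
    (fun m : ℤ => |(m : ℝ)| ^ (a.natDegree - ε)) =O[cofinite]
      fun m => ((radical ((a * b * (a - b)).eval m) : ℤ) : ℝ) := by
  obtain ⟨δ, hδ, hexp⟩ := exists_pos_sub_mul_one_add_le a.natDegree hε
  have hpow : (fun m : ℤ => (|(m : ℝ)| ^ (a.natDegree - ε)) ^ (1 + δ)) =O[cofinite]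
      fun m => |(m : ℝ)| ^ a.natDegree := by
    refine .of_norm_eventuallyLE ?_
    filter_upwards [tendsto_abs_intCast_cofinite_atTop.eventually_ge_atTop 1] with m hm
    rw [← Real.rpow_mul (abs_nonneg _), Real.norm_of_nonneg (by positivity), ← Real.rpow_natCast]
    exact Real.rpow_le_rpow_of_exponent_le hm hexp
  have ha : a ≠ 0 := left_ne_zero_of_mul (left_ne_zero_of_mul hT)
  refine isBigO_of_isBigO_rpow (by positivity : 0 < 1 + δ) (.of_forall fun m => by positivity)
    (.of_forall fun m => Int.cast_nonneg (Int.radical_pos _).le) ?_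
  exact (hpow.trans (isTheta_intCast_eval ha).isBigO_symm).trans (abc.isBigO_eval hδ hab hT)

theorem ABCConjecture.isBigO_radical_eval (abc : ABCConjecture) {g : ℤ[X]}
    (hg : Squarefree (g.map (algebraMap ℤ ℚ))) {ε : ℝ} (hε : 0 < ε) :
    (fun m : ℤ => |(m : ℝ)| ^ (g.natDegree - 1 - ε)) =O[cofinite]
      fun m => ((radical (g.eval m) : ℤ) : ℝ) := by
  obtain ⟨a, b, h, hab, hT, hh, ⟨c, N, hc, hdvd⟩, hdeg⟩ :=
    exists_isCoprime_map_dvd_mul_pow_of_squarefree_map hg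
  have hg₀ : g ≠ 0 := fun hzero => hg.ne_zero (by rw [hzero, Polynomial.map_zero])
  have hle : (h.natDegree + g.natDegree : ℝ) ≤ a.natDegree + 1 := mod_cast hdeg
  have hbound : (fun m : ℤ => |(m : ℝ)| ^ (a.natDegree - ε)) =O[cofinite]
      fun m => ((radical (g.eval m) : ℤ) : ℝ) * |(m : ℝ)| ^ h.natDegree :=
    ((abc.isBigO_eval_radical hε hab hT).trans (isBigO_radical_eval_of_dvd hc hg₀ hh hdvd)).trans
      ((isBigO_refl _ _).mul (isTheta_intCast_eval hh).isBigO)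
  have hge : ∀ᶠ m : ℤ in cofinite, 1 ≤ |(m : ℝ)| :=
    tendsto_abs_intCast_cofinite_atTop.eventually_ge_atTop 1
  calc (fun m : ℤ => |(m : ℝ)| ^ (g.natDegree - 1 - ε))
    _ =O[cofinite] fun m : ℤ => |(m : ℝ)| ^ (a.natDegree - ε) * (|(m : ℝ)| ^ h.natDegree)⁻¹ := by
      refine .of_norm_eventuallyLE ?_
      filter_upwards [hge] with m hm
      rw [Real.norm_of_nonneg (by positivity), ← div_eq_mul_inv,
        ← Real.rpow_sub_natCast (by positivity)]
      exact Real.rpow_le_rpow_of_exponent_le hm (by linarith)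
    _ =O[cofinite] fun m => ((radical (g.eval m) : ℤ) : ℝ) * |(m : ℝ)| ^ h.natDegree *
        (|(m : ℝ)| ^ h.natDegree)⁻¹ := hbound.mul (isBigO_refl _ _)
    _ =ᶠ[cofinite] fun m => ((radical (g.eval m) : ℤ) : ℝ) := by
      filter_upwards [hge] with m hm
      exact mul_inv_cancel_right₀ (by positivity) _

theorem ABCConjecture.finite_setOf_radical_sq_dvd_eval (abc : ABCConjecture) {g : ℤ[X]}
    (hg : Squarefree (g.map (algebraMap ℤ ℚ))) (hdeg : 2 < g.natDegree) :
    {m : ℤ | radical (g.eval m) ^ 2 ∣ g.eval m}.Finite := by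
  have hg₀ : g ≠ 0 := ne_zero_of_natDegree_gt hdeg
  by_contra hinf
  set l : Filter ℤ := cofinite ⊓ 𝓟 {m : ℤ | radical (g.eval m) ^ 2 ∣ g.eval m}
  have : l.NeBot := Set.Infinite.cofinite_inf_principal_neBot hinf
  have hexp : (g.natDegree : ℝ) < (g.natDegree - 1 - 1 / 4) * 2 := by
    have : (3 : ℝ) ≤ g.natDegree := mod_cast hdeg
    linarith
  have hsq : (fun m : ℤ => ((radical (g.eval m) : ℤ) : ℝ) ^ 2) =O[l]
      fun m => ((g.eval m : ℤ) : ℝ) := by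
    refine IsBigO.of_bound' (eventually_inf_principal.mpr ?_)
    filter_upwards [eventually_cofinite_not_isRoot hg₀] with m hm hdvd
    exact_mod_cast norm_intCast_le_of_dvd hdvd hm
  have hbound : (fun m : ℤ => |(m : ℝ)| ^ ((g.natDegree - 1 - 1 / 4 : ℝ) * 2)) =O[l]
      fun m => |(m : ℝ)| ^ (g.natDegree : ℝ) := by
    simp only [Real.rpow_mul (abs_nonneg _), Real.rpow_natCast, Real.rpow_ofNat]
    exact ((((abc.isBigO_radical_eval hg (by norm_num)).pow 2).mono inf_le_left).trans hsq).trans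
      ((isTheta_intCast_eval hg₀).isBigO.mono inf_le_left)
  have htendsto : Tendsto (fun m : ℤ => |(m : ℝ)|) l atTop :=
    tendsto_abs_intCast_cofinite_atTop.mono_left inf_le_left
  refine isLittleO_irrefl (Eventually.frequently ?_)
    (hbound.trans_isLittleO ((isLittleO_rpow_rpow_atTop hexp).comp_tendsto htendsto))
  filter_upwards [htendsto.eventually_gt_atTop 0] with m hm using (Real.rpow_pos_of_pos hm _).ne'

theorem stmt19 (abc : ABCConjecture)
    (g : Polynomial ℤ) (hdeg : 2 < g.natDegree)
    (hsep : (g.map (Int.castRingHom ℂ)).Separable) :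
    {m : ℤ | ∀ p : ℕ, p.Prime → (p : ℤ) ∣ g.eval m → (p : ℤ) ^ 2 ∣ g.eval m}.Finite := by
  have hsep_rat : (g.map (algebraMap ℤ ℚ)).Separable := by
    rw [← separable_map (algebraMap ℚ ℂ), Polynomial.map_map]
    rwa [RingHom.ext_int ((algebraMap ℚ ℂ).comp (algebraMap ℤ ℚ)) (Int.castRingHom ℂ)]
  refine (abc.finite_setOf_radical_sq_dvd_eval hsep_rat.squarefree hdeg).subset fun m hm =>
    radical_sq_dvd fun p hp hpg => ?_
  rw [← Int.natAbs_dvd] at hpg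
  rw [← Int.natAbs_dvd, Int.natAbs_pow, Nat.cast_pow]
  exact hm p.natAbs (Int.prime_iff_natAbs_prime.mp hp) hpg
end
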